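/- Assume N ≥ 2, 0 < α < N and p > (N+α)/N. There exists σ > 0, depending only on N, α, p and the growth and kernel constants (in particular independent of λ and of u), such that every u ∈ N_λ satisfies ‖u‖_{E_λ} ≥ σ. -/

import Mathlib

open scoped BigOperators ENNReal
open Filter

noncomputable section

namespace Choquard

variable {G : Type*}

/-- The word metric on a group with generating set `S`. -/
def wordDist [Group G] (S : Finset G) (x y : G) : ℕ :=
  sInf {k : ℕ | ∃ l : List G, (∀ g ∈ l, g ∈ S) ∧ l.length = k ∧ x⁻¹ * y = l.prod}

/-- The closed ball of radius `r` about `c` in the word metric. -/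
def ball [Group G] (S : Finset G) (c : G) (r : ℝ) : Set G :=
  {x | (wordDist S x c : ℝ) ≤ r}

/-- Polynomial growth of homogeneous dimension `N`. -/
def PolyGrowth [Group G] (S : Finset G) (N : ℕ) : Prop :=
  ∃ C₁ C₂ : ℝ, 0 < C₁ ∧ 0 < C₂ ∧ ∀ r : ℝ, 1 ≤ r →
    C₁ * r ^ N ≤ ((ball S (1 : G) r).ncard : ℝ) ∧
    ((ball S (1 : G) r).ncard : ℝ) ≤ C₂ * r ^ N

/-- Riesz-type asymptotics for the kernel `R`. -/
def RieszKernel [Group G] (S : Finset G) (N : ℕ) (α : ℝ) (R : G → G → ℝ) : Prop :=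
  (∀ x y, 0 < R x y) ∧
  ∃ c₁ c₂ : ℝ, 0 < c₁ ∧ 0 < c₂ ∧ ∀ x y : G, x ≠ y →
    c₁ * (wordDist S x y : ℝ) ^ (α - (N : ℝ)) ≤ R x y ∧
    R x y ≤ c₂ * (wordDist S x y : ℝ) ^ (α - (N : ℝ))

/-- Convolution `(R ∗ f)(x) = Σ_{y ≠ x} R x y f y`. -/
def conv [DecidableEq G] (R : G → G → ℝ) (f : G → ℝ) (x : G) : ℝ :=
  ∑' y, if y = x then 0 else R x y * f y

/-- The convolution as an extended-nonnegative-real valued sum. -/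
def convE [DecidableEq G] (R : G → G → ℝ) (f : G → ℝ) (x : G) : ℝ≥0∞ :=
  ∑' y, if y = x then 0 else ENNReal.ofReal (R x y * f y)

/-- Membership in `ℓ^q(G)`. -/
def Memlp (q : ℝ) (u : G → ℝ) : Prop := Summable fun x => |u x| ^ q

/-- The `ℓ^q` norm. -/
def lpNorm (q : ℝ) (u : G → ℝ) : ℝ := (∑' x, |u x| ^ q) ^ (1 / q)

/-- The `ℓ^∞` norm. -/
def supNorm (u : G → ℝ) : ℝ := ⨆ x, |u x|

/-- The graph Laplacian `Δu(x) = Σ_{s ∈ S} (u(xs) - u(x))`. -/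
def lap [Group G] (S : Finset G) (u : G → ℝ) (x : G) : ℝ :=
  ∑ s ∈ S, (u (x * s) - u x)

/-- The gradient form `∇u∇v(x) = (1/2) Σ_{s ∈ S} (u(xs)-u(x))(v(xs)-v(x))`. -/
def grad [Group G] (S : Finset G) (u v : G → ℝ) (x : G) : ℝ :=
  (1 / 2) * ∑ s ∈ S, (u (x * s) - u x) * (v (x * s) - v x)

/-- The density `|Δu|² + |∇u|² + (1 + λa)u²`. -/
def eDensity [Group G] (S : Finset G) (a : G → ℝ) (lam : ℝ) (u : G → ℝ) (x : G) : ℝ :=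
  (lap S u x) ^ 2 + grad S u u x + (1 + lam * a x) * (u x) ^ 2

/-- Membership in the space `E_λ`. -/
def MemE [Group G] (S : Finset G) (a : G → ℝ) (lam : ℝ) (u : G → ℝ) : Prop :=
  Summable (eDensity S a lam u)

/-- `‖u‖²_{E_λ}`. -/
def normEsq [Group G] (S : Finset G) (a : G → ℝ) (lam : ℝ) (u : G → ℝ) : ℝ :=
  ∑' x, eDensity S a lam u x

/-- `‖u‖_{E_λ}`. -/
def normE [Group G] (S : Finset G) (a : G → ℝ) (lam : ℝ) (u : G → ℝ) : ℝ :=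
  Real.sqrt (normEsq S a lam u)

/-- The inner product `⟨u, v⟩_{E_λ}`. -/
def innerE [Group G] (S : Finset G) (a : G → ℝ) (lam : ℝ) (u v : G → ℝ) : ℝ :=
  ∑' x, (lap S u x * lap S v x + grad S u v x + (1 + lam * a x) * (u x * v x))

/-- The nonlocal term `Σ_G (R_α ∗ |u|^p)|u|^p`. -/
def Dterm [DecidableEq G] (R : G → G → ℝ) (p : ℝ) (u : G → ℝ) : ℝ :=
  ∑' x, conv R (fun y => |u y| ^ p) x * |u x| ^ p

/-- The nonlocal pairing `Σ_G (R_α ∗ |u|^p)|u|^{p-2} u v`. -/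
def Kterm [DecidableEq G] (R : G → G → ℝ) (p : ℝ) (u v : G → ℝ) : ℝ :=
  ∑' x, conv R (fun y => |u y| ^ p) x * (|u x| ^ (p - 2) * u x * v x)

/-- The energy functional `J_λ`. -/
def Jfun [Group G] [DecidableEq G] (S : Finset G) (a : G → ℝ) (lam : ℝ)
    (R : G → G → ℝ) (p : ℝ) (u : G → ℝ) : ℝ :=
  (1 / 2) * normEsq S a lam u - (1 / (2 * p)) * Dterm R p u

/-- The derivative pairing `(J'_λ(u), v)`. -/
def Jd [Group G] [DecidableEq G] (S : Finset G) (a : G → ℝ) (lam : ℝ)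
    (R : G → G → ℝ) (p : ℝ) (u v : G → ℝ) : ℝ :=
  innerE S a lam u v - Kterm R p u v

/-- The Nehari manifold `N_λ`. -/
def nehari [Group G] [DecidableEq G] (S : Finset G) (a : G → ℝ) (lam : ℝ)
    (R : G → G → ℝ) (p : ℝ) : Set (G → ℝ) :=
  {u | MemE S a lam u ∧ u ≠ 0 ∧ Jd S a lam R p u u = 0}

/-- `m_λ = inf_{N_λ} J_λ`. -/
def mlam [Group G] [DecidableEq G] (S : Finset G) (a : G → ℝ) (lam : ℝ)
    (R : G → G → ℝ) (p : ℝ) : ℝ :=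
  sInf (Jfun S a lam R p '' nehari S a lam R p)

/-- The norm of `J'_λ(u)` in the dual space `E_λ*`. -/
def dualNorm [Group G] [DecidableEq G] (S : Finset G) (a : G → ℝ) (lam : ℝ)
    (R : G → G → ℝ) (p : ℝ) (u : G → ℝ) : ℝ :=
  sSup {t : ℝ | ∃ v, MemE S a lam v ∧ normEsq S a lam v ≤ 1 ∧ t = |Jd S a lam R p u v|}

/-- `(PS)_c` sequence for `J_λ`. -/
def PSseq [Group G] [DecidableEq G] (S : Finset G) (a : G → ℝ) (lam : ℝ)
    (R : G → G → ℝ) (p : ℝ) (c : ℝ) (U : ℕ → G → ℝ) : Prop :=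
  (∀ n, MemE S a lam (U n)) ∧
  Tendsto (fun n => Jfun S a lam R p (U n)) atTop (nhds c) ∧
  Tendsto (fun n => dualNorm S a lam R p (U n)) atTop (nhds 0)

/-- The Cayley graph of `(G, S)`. -/
def cayley [Group G] (S : Finset G) : SimpleGraph G :=
  SimpleGraph.fromRel (fun x y => x⁻¹ * y ∈ S)

/-- Condition (A₁): the potential well `Ω = {a = 0}` is nonempty, finite and connected. -/
def CondA1 [Group G] (S : Finset G) (a : G → ℝ) : Prop :=
  {x | a x = 0}.Nonempty ∧ {x | a x = 0}.Finite ∧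
  ((cayley S).induce {x | a x = 0}).Connected

/-- Condition (A₂): some sublevel set `{a ≤ M}` is finite and nonempty. -/
def CondA2 (a : G → ℝ) : Prop :=
  ∃ M : ℝ, 0 < M ∧ {x | a x ≤ M}.Finite ∧ {x | a x ≤ M}.Nonempty

/-- The density `|Δu|² + |∇u|² + u²` of the `W^{2,2}` norm. -/
def wDensity [Group G] (S : Finset G) (u : G → ℝ) (x : G) : ℝ :=
  (lap S u x) ^ 2 + grad S u u x + (u x) ^ 2

/-- Membership in `W^{2,2}(G)`. -/
def MemW [Group G] (S : Finset G) (u : G → ℝ) : Prop := Summable (wDensity S u)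

/-- `‖u‖²_{W^{2,2}}`. -/
def normWsq [Group G] (S : Finset G) (u : G → ℝ) : ℝ := ∑' x, wDensity S u x

/-- Membership in `E(Ω)`: vanishing outside `Ω`. -/
def MemEOm (Ω : Set G) (u : G → ℝ) : Prop := ∀ x ∉ Ω, u x = 0

/-- `‖u‖²_{E(Ω)}`. -/
def normOmSq [Group G] (S : Finset G) (Ω : Set G) (u : G → ℝ) : ℝ :=
  (∑' x, ((lap S u x) ^ 2 + grad S u u x)) + ∑' x : Ω, (u (x : G)) ^ 2

/-- The nonlocal term over `Ω`. -/
def DtermOm [DecidableEq G] (Ω : Set G) (R : G → G → ℝ) (p : ℝ) (u : G → ℝ) : ℝ :=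
  ∑' x : Ω, conv R (fun y => |u y| ^ p) (x : G) * |u (x : G)| ^ p

/-- The limiting energy functional `J_Ω`. -/
def JOm [Group G] [DecidableEq G] (S : Finset G) (Ω : Set G) (R : G → G → ℝ) (p : ℝ)
    (u : G → ℝ) : ℝ :=
  (1 / 2) * normOmSq S Ω u - (1 / (2 * p)) * DtermOm Ω R p u

/-- The derivative pairing `(J'_Ω(u), v)`. -/
def JdOm [Group G] [DecidableEq G] (S : Finset G) (Ω : Set G) (R : G → G → ℝ) (p : ℝ)
    (u v : G → ℝ) : ℝ :=
  (∑' x, (lap S u x * lap S v x + grad S u v x)) + (∑' x : Ω, u (x : G) * v (x : G))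
    - ∑' x : Ω, conv R (fun y => |u y| ^ p) (x : G) * (|u (x : G)| ^ (p - 2) * u (x : G) * v (x : G))

/-- The Nehari manifold `N_Ω`. -/
def nehariOm [Group G] [DecidableEq G] (S : Finset G) (Ω : Set G) (R : G → G → ℝ)
    (p : ℝ) : Set (G → ℝ) :=
  {u | MemEOm Ω u ∧ u ≠ 0 ∧ JdOm S Ω R p u u = 0}

/-- `m_Ω = inf_{N_Ω} J_Ω`. -/
def mOm [Group G] [DecidableEq G] (S : Finset G) (Ω : Set G) (R : G → G → ℝ) (p : ℝ) : ℝ :=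
  sInf (JOm S Ω R p '' nehariOm S Ω R p)

/-!
On a discrete group `ℓ²` embeds in every `ℓ^s` with `s ≥ 2`. Choosing `q` with
`(N + α) / N < q < min p 2`, the kernel `d ^ (α - N)` lies in `ℓ^(1 / (2 - q))` by dyadic summation
over balls, so Young's inequality bounds the nonlocal term by `K ‖u‖₂ ^ (2 p) ≤ K ‖u‖_E ^ (2 p)`.
On the Nehari manifold that term equals `‖u‖_E ^ 2 > 0`, and since `p > 1` dividing by `‖u‖_E ^ 2`
bounds `‖u‖_E` below.
-/

open MeasureTheory in
theorem tsum_prod_rpow_le {ι κ : Type*} (s : Finset κ) (f : κ → ι → ℝ≥0∞) {w : κ → ℝ}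
    (hw : ∑ j ∈ s, w j = 1) (hw0 : ∀ j ∈ s, 0 ≤ w j) :
    ∑' i, ∏ j ∈ s, f j i ^ w j ≤ ∏ j ∈ s, (∑' i, f j i) ^ w j := by
  let _ : MeasurableSpace ι := ⊤
  simpa only [lintegral_count] using
    ENNReal.lintegral_prod_norm_pow_le (μ := Measure.count) s
      (fun j _ => (measurable_from_top (f := f j)).aemeasurable) hw hw0

theorem tsum_rpow_le_rpow_tsum {ι : Type*} (f : ι → ℝ≥0∞) {r : ℝ} (hr : 1 ≤ r) :
    ∑' i, f i ^ r ≤ (∑' i, f i) ^ r := by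
  have hr0 : 0 ≤ r - 1 := by linarith
  have rpow_eq_mul (t : ℝ≥0∞) : t ^ r = t * t ^ (r - 1) := by
    conv_lhs => rw [← add_sub_cancel 1 r, ENNReal.rpow_add_of_nonneg _ _ zero_le_one hr0,
      ENNReal.rpow_one]
  calc ∑' i, f i ^ r ≤ ∑' i, f i * (∑' j, f j) ^ (r - 1) := by
        refine ENNReal.tsum_le_tsum fun i => ?_
        rw [rpow_eq_mul]
        gcongr
        exact ENNReal.le_tsum i
    _ = (∑' i, f i) ^ r := by rw [ENNReal.tsum_mul_right, ← rpow_eq_mul]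

-- Young's convolution inequality for the exponents `1 / (a + b)`, `1 / (a + c)`, `1 / (b + c)`:
-- Hölder with weights `a`, `b`, `c` applied to the products `k f`, `k g`, `f g`.
theorem tsum_tsum_convolution_rpow_le {G : Type*} [Group G] (k f g : G → ℝ≥0∞) {a b c : ℝ}
    (ha : 0 ≤ a) (hb : 0 ≤ b) (hc : 0 ≤ c) (habc : a + b + c = 1) :
    ∑' x, ∑' y, k (y⁻¹ * x) ^ (a + b) * f y ^ (a + c) * g x ^ (b + c) ≤
      (∑' z, k z) ^ (a + b) * (∑' y, f y) ^ (a + c) * (∑' x, g x) ^ (b + c) := by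
  have interpolate (r s t : ℝ≥0∞) : r ^ (a + b) * s ^ (a + c) * t ^ (b + c) =
      (r * s) ^ a * (r * t) ^ b * (s * t) ^ c := by
    simp only [ENNReal.mul_rpow_of_nonneg, ENNReal.rpow_add_of_nonneg, ha, hb, hc]
    ring
  have tsum_translate (y : G) : ∑' x, k (y⁻¹ * x) = ∑' z, k z := (Equiv.mulLeft y⁻¹).tsum_eq k
  have tsum_reflect (x : G) : ∑' y, k (y⁻¹ * x) = ∑' z, k z :=
    ((Equiv.inv G).trans (Equiv.mulRight x)).tsum_eq k
  have sum_kf : ∑' z : G × G, k (z.2⁻¹ * z.1) * f z.2 = (∑' z, k z) * ∑' y, f y := by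
    rw [ENNReal.tsum_prod', ENNReal.tsum_comm]
    simp_rw [ENNReal.tsum_mul_right, tsum_translate, ENNReal.tsum_mul_left]
  have sum_kg : ∑' z : G × G, k (z.2⁻¹ * z.1) * g z.1 = (∑' z, k z) * ∑' x, g x := by
    rw [ENNReal.tsum_prod']
    simp_rw [ENNReal.tsum_mul_right, tsum_reflect, ENNReal.tsum_mul_left]
  have sum_fg : ∑' z : G × G, f z.2 * g z.1 = (∑' y, f y) * ∑' x, g x := by
    rw [ENNReal.tsum_prod']
    simp_rw [ENNReal.tsum_mul_right, ENNReal.tsum_mul_left]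
  have holder := tsum_prod_rpow_le Finset.univ
    ![fun z : G × G => k (z.2⁻¹ * z.1) * f z.2, fun z => k (z.2⁻¹ * z.1) * g z.1,
      fun z => f z.2 * g z.1]
    (w := ![a, b, c]) (by simpa [Fin.sum_univ_three] using habc)
    (by simp [Fin.forall_fin_succ, ha, hb, hc])
  simp only [Fin.prod_univ_three, Matrix.cons_val] at holder
  rw [sum_kf, sum_kg, sum_fg, ← interpolate, ENNReal.tsum_prod'] at holder
  simpa only [interpolate] using holder

-- The single term `j = Nat.log 2 n` already dominates the left-hand side.
theorem ofReal_rpow_neg_le_tsum_dyadic {θ : ℝ} (hθ : 0 < θ) (n : ℕ) :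
    ENNReal.ofReal ((n : ℝ) ^ (-θ)) ≤
      ∑' j : ℕ, if (n : ℝ) ≤ 2 ^ (j + 1) then ENNReal.ofReal (((2 : ℝ) ^ (-θ)) ^ j) else 0 := by
  rcases eq_or_ne n 0 with rfl | hn
  · simp [Real.zero_rpow (neg_ne_zero.mpr hθ.ne')]
  have log_le : (2 : ℝ) ^ Nat.log 2 n ≤ n := mod_cast Nat.pow_log_le_self 2 hn
  have le_log : (n : ℝ) ≤ 2 ^ (Nat.log 2 n + 1) :=
    mod_cast (Nat.lt_pow_succ_log_self one_lt_two n).le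
  refine le_trans ?_ (ENNReal.le_tsum (Nat.log 2 n))
  rw [if_pos le_log, Real.rpow_pow_comm zero_le_two]
  exact ENNReal.ofReal_le_ofReal
    (Real.rpow_le_rpow_of_nonpos (by positivity) log_le (by linarith))

-- Elements with `ℓ i = 0` contribute nothing, since `0 ^ (-θ) = 0` in Lean.
theorem tsum_ofReal_rpow_neg_ne_top {ι : Type*} (ℓ : ι → ℕ) {C d θ : ℝ} (hθ : 0 < θ)
    (hd : d < θ)
    (hcard : ∀ r : ℝ, 1 ≤ r → ({i | (ℓ i : ℝ) ≤ r}.encard : ℝ≥0∞) ≤ ENNReal.ofReal (C * r ^ d)) :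
    ∑' i, ENNReal.ofReal ((ℓ i : ℝ) ^ (-θ)) ≠ ⊤ := by
  have dyadic_sum_le (j : ℕ) :
      (∑' i, if (ℓ i : ℝ) ≤ 2 ^ (j + 1) then ENNReal.ofReal (((2 : ℝ) ^ (-θ)) ^ j) else 0) ≤
        ENNReal.ofReal (C * 2 ^ d * ((2 : ℝ) ^ (d - θ)) ^ j) := by
    have dyadic_pow : ((2 : ℝ) ^ (j + 1)) ^ d * ((2 : ℝ) ^ (-θ)) ^ j =
        2 ^ d * ((2 : ℝ) ^ (d - θ)) ^ j := by
      rw [← Real.rpow_pow_comm zero_le_two, sub_eq_add_neg, Real.rpow_add zero_lt_two, mul_pow]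
      ring
    calc _ = ({i | (ℓ i : ℝ) ≤ 2 ^ (j + 1)}.encard : ℝ≥0∞) *
          ENNReal.ofReal (((2 : ℝ) ^ (-θ)) ^ j) := by
          rw [← ENNReal.tsum_set_const,
            tsum_subtype _ fun _ => ENNReal.ofReal (((2 : ℝ) ^ (-θ)) ^ j)]
          rfl
      _ ≤ ENNReal.ofReal (C * ((2 : ℝ) ^ (j + 1)) ^ d) *
          ENNReal.ofReal (((2 : ℝ) ^ (-θ)) ^ j) := by
          gcongr
          exact hcard _ (one_le_pow₀ one_le_two)
      _ = _ := by rw [← ENNReal.ofReal_mul' (by positivity), mul_assoc, dyadic_pow, mul_assoc]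
  have ratio_lt_one : (2 : ℝ) ^ (d - θ) < 1 :=
    Real.rpow_lt_one_of_one_lt_of_neg one_lt_two (by linarith)
  have geometric_ne_top := ((summable_geometric_of_lt_one (by positivity) ratio_lt_one).mul_left
    (C * 2 ^ d)).tsum_ofReal_ne_top
  refine ne_top_of_le_ne_top geometric_ne_top ?_
  calc _ ≤ _ := ENNReal.tsum_le_tsum fun i => ofReal_rpow_neg_le_tsum_dyadic hθ (ℓ i)
    _ = _ := ENNReal.tsum_comm
    _ ≤ _ := ENNReal.tsum_le_tsum dyadic_sum_le

theorem rpow_inv_le_of_le_mul_rpow {C t p : ℝ} (hC : 0 < C) (ht : 0 < t) (hp : 1 < p)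
    (h : t ≤ C * t ^ p) : C⁻¹ ^ (p - 1)⁻¹ ≤ t := by
  rw [Real.rpow_inv_le_iff_of_pos (by positivity) ht.le (by linarith), Real.rpow_sub_one ht.ne',
    inv_le_iff_one_le_mul₀' hC, ← mul_div_assoc, one_le_div ht]
  exact h

section WordMetric

variable [Group G] {S : Finset G}

theorem wordDist_mul_left (S : Finset G) (z x y : G) :
    wordDist S (z * x) (z * y) = wordDist S x y := by
  simp [wordDist, mul_assoc]

theorem wordDist_eq_wordDist_one (S : Finset G) (x y : G) :
    wordDist S x y = wordDist S (y⁻¹ * x) 1 := by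
  rw [← wordDist_mul_left S y⁻¹, inv_mul_cancel]

-- The lower growth bound excludes infinite balls, whose `ncard` would be `0`.
theorem PolyGrowth.exists_encard_ball_le {N : ℕ} (h : PolyGrowth S N) :
    ∃ C : ℝ, ∀ r : ℝ, 1 ≤ r →
      ((ball S (1 : G) r).encard : ℝ≥0∞) ≤ ENNReal.ofReal (C * r ^ (N : ℝ)) := by
  obtain ⟨C₁, C₂, hC₁, -, growth⟩ := h
  refine ⟨C₂, fun r hr => ?_⟩
  have ncard_pos : 0 < ((ball S (1 : G) r).ncard : ℝ) :=
    (by positivity : 0 < C₁ * r ^ N).trans_le (growth r hr).1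
  have ball_finite : (ball S (1 : G) r).Finite :=
    Set.finite_of_ncard_pos (mod_cast ncard_pos)
  rw [← ball_finite.cast_ncard_eq, ENat.toENNReal_coe, Real.rpow_natCast, ← ENNReal.ofReal_natCast]
  exact ENNReal.ofReal_le_ofReal (growth r hr).2

theorem PolyGrowth.tsum_wordDist_rpow_neg_ne_top {N : ℕ} (h : PolyGrowth S N) {θ : ℝ}
    (hθ : (N : ℝ) < θ) :
    ∑' x : G, ENNReal.ofReal ((wordDist S x 1 : ℝ) ^ (-θ)) ≠ ⊤ := by
  obtain ⟨C, hC⟩ := h.exists_encard_ball_le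
  exact tsum_ofReal_rpow_neg_ne_top _ (N.cast_nonneg.trans_lt hθ) hθ hC

end WordMetric

section Energy

variable [Group G] {S : Finset G} {a : G → ℝ} {lam : ℝ} {u : G → ℝ}

theorem grad_self_nonneg (S : Finset G) (u : G → ℝ) (x : G) : 0 ≤ grad S u u x :=
  mul_nonneg (by norm_num) (Finset.sum_nonneg fun _ _ => mul_self_nonneg _)

theorem sq_le_eDensity (S : Finset G) {x : G} (ha : 0 ≤ lam * a x) (u : G → ℝ) :
    u x ^ 2 ≤ eDensity S a lam u x := by
  rw [eDensity]
  linarith [grad_self_nonneg S u x, sq_nonneg (lap S u x), mul_nonneg ha (sq_nonneg (u x))]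

theorem normEsq_pos (ha : ∀ x, 0 ≤ lam * a x) (hu : MemE S a lam u) (hu0 : u ≠ 0) :
    0 < normEsq S a lam u := by
  obtain ⟨x, hx⟩ := Function.ne_iff.mp hu0
  have hx_pos : 0 < u x ^ 2 := sq_pos_of_ne_zero hx
  exact hu.tsum_pos (fun y => (sq_nonneg _).trans (sq_le_eDensity S (ha y) u)) x
    (hx_pos.trans_le (sq_le_eDensity S (ha x) u))

theorem tsum_enorm_sq_le_normEsq (ha : ∀ x, 0 ≤ lam * a x) (hu : MemE S a lam u) :
    ∑' x, ‖u x‖ₑ ^ 2 ≤ ENNReal.ofReal (normEsq S a lam u) := by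
  rw [normEsq, ENNReal.ofReal_tsum_of_nonneg
    (fun x => (sq_nonneg _).trans (sq_le_eDensity S (ha x) u)) hu]
  refine ENNReal.tsum_le_tsum fun x => ?_
  rw [← enorm_pow, Real.enorm_of_nonneg (sq_nonneg _)]
  exact ENNReal.ofReal_le_ofReal (sq_le_eDensity S (ha x) u)

theorem innerE_self (S : Finset G) (a : G → ℝ) (lam : ℝ) (u : G → ℝ) :
    innerE S a lam u u = normEsq S a lam u :=
  tsum_congr fun x => by rw [eDensity]; ring

end Energy

section Nonlocal

variable [DecidableEq G] {R : G → G → ℝ}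

theorem Kterm_self {p : ℝ} (hp : p ≠ 0) (R : G → G → ℝ) (u : G → ℝ) :
    Kterm R p u u = Dterm R p u := by
  have abs_rpow_sub_two_mul_sq (t : ℝ) : |t| ^ (p - 2) * t * t = |t| ^ p := by
    rw [mul_assoc, ← sq, ← sq_abs, ← Real.rpow_natCast,
      ← Real.rpow_add' (abs_nonneg t) (by simpa using hp)]
    norm_num
  simp only [Kterm, Dterm, abs_rpow_sub_two_mul_sq]

theorem enorm_Dterm_le_tsum (R : G → G → ℝ) {p : ℝ} (hp : 0 ≤ p) (u : G → ℝ) :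
    ‖Dterm R p u‖ₑ ≤
      ∑' x, ∑' y, if y = x then 0 else ‖R x y‖ₑ * ‖u y‖ₑ ^ p * ‖u x‖ₑ ^ p := by
  have enorm_abs_rpow (t : ℝ) : ‖|t| ^ p‖ₑ = ‖t‖ₑ ^ p := by
    rw [Real.enorm_rpow_of_nonneg (abs_nonneg t) hp, Real.enorm_abs]
  calc ‖Dterm R p u‖ₑ ≤ ∑' x, ‖conv R (fun y => |u y| ^ p) x * |u x| ^ p‖ₑ :=
        enorm_tsum_le_tsum_enorm
    _ ≤ ∑' x, (∑' y, ‖if y = x then 0 else R x y * |u y| ^ p‖ₑ) * ‖u x‖ₑ ^ p := by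
        gcongr with x
        rw [enorm_mul, enorm_abs_rpow]
        gcongr
        exact enorm_tsum_le_tsum_enorm
    _ = _ := by
        simp_rw [← ENNReal.tsum_mul_right]
        refine tsum_congr fun x => tsum_congr fun y => ?_
        split_ifs <;> simp [enorm_abs_rpow]

-- A discrete Hardy–Littlewood–Sobolev inequality: Young's inequality with `|u| ^ p ∈ ℓ^(2 / q)`,
-- where `q ≤ p` enters through the embedding `ℓ² ⊆ ℓ^(2 p / q)`.
theorem enorm_Dterm_le [Group G] {k : G → ℝ≥0∞} {c : ℝ≥0∞} {p q : ℝ} (hq1 : 1 ≤ q) (hq2 : q ≤ 2)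
    (hqp : q ≤ p) (hR : ∀ x y, x ≠ y → ‖R x y‖ₑ ≤ c * k (y⁻¹ * x) ^ (2 - q)) (u : G → ℝ) :
    ‖Dterm R p u‖ₑ ≤ c * (∑' z, k z) ^ (2 - q) * (∑' x, ‖u x‖ₑ ^ 2) ^ p := by
  set U : G → ℝ≥0∞ := fun x => (‖u x‖ₑ ^ 2) ^ (p / q)
  have U_rpow (x : G) : U x ^ (q / 2) = ‖u x‖ₑ ^ p := by
    simp only [U, ← ENNReal.rpow_natCast, ← ENNReal.rpow_mul]
    congr 1
    push_cast
    field_simp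
  have young : ∑' x, ∑' y, k (y⁻¹ * x) ^ (2 - q) * U y ^ (q / 2) * U x ^ (q / 2) ≤
      (∑' z, k z) ^ (2 - q) * (∑' y, U y) ^ (q / 2) * (∑' x, U x) ^ (q / 2) := by
    have kernel_exponent : 1 - q / 2 + (1 - q / 2) = 2 - q := by ring
    have function_exponent : 1 - q / 2 + (q - 1) = q / 2 := by ring
    simpa only [kernel_exponent, function_exponent] using
      tsum_tsum_convolution_rpow_le k U U (a := 1 - q / 2) (b := 1 - q / 2) (c := q - 1)
        (by linarith) (by linarith) (by linarith) (by ring)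
  have tsum_U_rpow_le : (∑' x, U x) ^ q ≤ (∑' x, ‖u x‖ₑ ^ 2) ^ p :=
    calc (∑' x, U x) ^ q ≤ ((∑' x, ‖u x‖ₑ ^ 2) ^ (p / q)) ^ q := by
          gcongr
          exact tsum_rpow_le_rpow_tsum _ ((one_le_div (by linarith)).mpr hqp)
      _ = _ := by rw [← ENNReal.rpow_mul, div_mul_cancel₀ _ (by linarith)]
  calc ‖Dterm R p u‖ₑ
      ≤ ∑' x, ∑' y, if y = x then 0 else ‖R x y‖ₑ * ‖u y‖ₑ ^ p * ‖u x‖ₑ ^ p :=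
        enorm_Dterm_le_tsum R (by linarith) u
    _ ≤ ∑' x, ∑' y, c * (k (y⁻¹ * x) ^ (2 - q) * U y ^ (q / 2) * U x ^ (q / 2)) := by
        gcongr with x y
        split_ifs with hyx
        · exact zero_le
        · rw [U_rpow, U_rpow, ← mul_assoc, ← mul_assoc]
          gcongr
          exact hR x y (Ne.symm hyx)
    _ ≤ c * ((∑' z, k z) ^ (2 - q) * (∑' y, U y) ^ (q / 2) * (∑' x, U x) ^ (q / 2)) := by
        simp_rw [ENNReal.tsum_mul_left]
        gcongr
    _ = c * (∑' z, k z) ^ (2 - q) * (∑' x, U x) ^ q := by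
        rw [mul_assoc _ (_ ^ (q / 2)), ← ENNReal.rpow_add_of_nonneg _ _ (by linarith)
          (by linarith), add_halves, mul_assoc]
    _ ≤ _ := by gcongr

end Nonlocal

section Nehari

variable [Group G] [DecidableEq G] {S : Finset G} {a : G → ℝ} {lam p : ℝ} {R : G → G → ℝ}
  {u : G → ℝ}

theorem normEsq_eq_Dterm_of_mem_nehari (hp : p ≠ 0) (hu : u ∈ nehari S a lam R p) :
    normEsq S a lam u = Dterm R p u := by
  rw [← innerE_self, ← Kterm_self hp, ← sub_eq_zero]
  exact hu.2.2

theorem exists_pos_forall_mem_nehari_le_normE {k : G → ℝ≥0∞} {c : ℝ≥0∞} {q : ℝ} (hq1 : 1 ≤ q)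
    (hq2 : q ≤ 2) (hqp : q ≤ p) (hp : 1 < p) (hc : c ≠ ⊤) (hk : ∑' z, k z ≠ ⊤)
    (hR : ∀ x y, x ≠ y → ‖R x y‖ₑ ≤ c * k (y⁻¹ * x) ^ (2 - q)) (S : Finset G) :
    ∃ σ : ℝ, 0 < σ ∧ ∀ lam : ℝ, ∀ a : G → ℝ, (∀ x, 0 ≤ lam * a x) →
      ∀ u ∈ nehari S a lam R p, σ ≤ normE S a lam u := by
  set K : ℝ≥0∞ := c * (∑' z, k z) ^ (2 - q)
  have hK : K ≠ ⊤ := ENNReal.mul_ne_top hc (ENNReal.rpow_ne_top_of_nonneg (by linarith) hk)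
  set C : ℝ := K.toReal + 1
  have hC : 0 < C := by positivity
  have K_le : K ≤ ENNReal.ofReal C :=
    ENNReal.le_ofReal_iff_toReal_le hK hC.le |>.mpr (by simp [C])
  refine ⟨√(C⁻¹ ^ (p - 1)⁻¹), by positivity, fun lam a ha u hu => Real.sqrt_le_sqrt ?_⟩
  set E : ℝ := normEsq S a lam u
  have hE : 0 < E := normEsq_pos ha hu.1 hu.2.1
  have ofReal_E_le : ENNReal.ofReal E ≤ ENNReal.ofReal (C * E ^ p) :=
    calc ENNReal.ofReal E = ‖Dterm R p u‖ₑ := by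
          rw [← normEsq_eq_Dterm_of_mem_nehari (by linarith) hu, Real.enorm_of_nonneg hE.le]
      _ ≤ K * (∑' x, ‖u x‖ₑ ^ 2) ^ p := enorm_Dterm_le hq1 hq2 hqp hR u
      _ ≤ ENNReal.ofReal C * ENNReal.ofReal E ^ p := by
          gcongr
          exact tsum_enorm_sq_le_normEsq ha hu.1
      _ = _ := by rw [ENNReal.ofReal_rpow_of_pos hE, ENNReal.ofReal_mul hC.le]
  exact rpow_inv_le_of_le_mul_rpow hC hE hp
    ((ENNReal.ofReal_le_ofReal_iff (by positivity)).mp ofReal_E_le)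

end Nehari

theorem nehari_norm_lower_bound_general [Group G] [DecidableEq G] (S : Finset G) {N : ℕ}
    (hgrowth : PolyGrowth S N) {α : ℝ} (hα0 : 0 < α) (hαN : α < (N : ℝ))
    {R : G → G → ℝ} {c : ℝ}
    (hR : ∀ x y, x ≠ y → |R x y| ≤ c * (wordDist S x y : ℝ) ^ (α - (N : ℝ)))
    {p : ℝ} (hp : ((N : ℝ) + α) / (N : ℝ) < p) :
    ∃ σ : ℝ, 0 < σ ∧ ∀ lam : ℝ, ∀ a : G → ℝ, (∀ x, 0 ≤ lam * a x) →
      ∀ u ∈ nehari S a lam R p, σ ≤ normE S a lam u := by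
  have hN : (0 : ℝ) < N := hα0.trans hαN
  have critical_lt_two : ((N : ℝ) + α) / N < 2 := by rw [div_lt_iff₀ hN]; linarith
  obtain ⟨q, critical_lt_q, hq⟩ := exists_between (lt_min hp critical_lt_two)
  obtain ⟨hqp, hq2⟩ := lt_min_iff.mp hq
  have hq1 : 1 < q := ((one_lt_div hN).mpr (by linarith)).trans critical_lt_q
  set θ : ℝ := ((N : ℝ) - α) / (2 - q)
  have hθ : (N : ℝ) < θ := by
    rw [lt_div_iff₀ (by linarith)]
    linarith [(div_lt_iff₀ hN).mp critical_lt_q]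
  refine exists_pos_forall_mem_nehari_le_normE hq1.le hq2.le hqp.le (hq1.trans hqp)
    (ENNReal.ofReal_ne_top (r := c)) (hgrowth.tsum_wordDist_rpow_neg_ne_top hθ) (fun x y hxy => ?_) S
  have kernel_rpow :
      ((wordDist S x y : ℝ) ^ (-θ)) ^ (2 - q) = (wordDist S x y : ℝ) ^ (α - N) := by
    rw [← Real.rpow_mul (Nat.cast_nonneg _), neg_mul, div_mul_cancel₀ _ (by linarith), neg_sub]
  rw [← wordDist_eq_wordDist_one, ENNReal.ofReal_rpow_of_nonneg (by positivity) (by linarith),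
    kernel_rpow, ← ENNReal.ofReal_mul' (by positivity), Real.enorm_eq_ofReal_abs]
  exact ENNReal.ofReal_le_ofReal (hR x y hxy)

theorem nehari_norm_lower_bound
    {G : Type*} [Group G] [Countable G] [DecidableEq G]
    (S : Finset G) (hSsymm : ∀ s ∈ S, s⁻¹ ∈ S)
    (hSgen : Subgroup.closure (S : Set G) = ⊤)
    (N : ℕ) (hN : 2 ≤ N) (hgrowth : PolyGrowth S N)
    (α : ℝ) (hα0 : 0 < α) (hαN : α < (N : ℝ))
    (R : G → G → ℝ) (hR : RieszKernel S N α R)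
    (p : ℝ) (hp : ((N : ℝ) + α) / (N : ℝ) < p) :
    ∃ σ : ℝ, 0 < σ ∧ ∀ lam : ℝ, 0 < lam → ∀ a : G → ℝ, (∀ x, 0 ≤ a x) →
      ∀ u ∈ nehari S a lam R p, σ ≤ normE S a lam u := by
  obtain ⟨hR0, _, c, -, -, hR⟩ := hR
  obtain ⟨σ, hσ, bound⟩ := nehari_norm_lower_bound_general S hgrowth hα0 hαN
    (fun x y hxy => (abs_of_pos (hR0 x y)).trans_le (hR x y hxy).2) hp
  exact ⟨σ, hσ, fun lam hlam a ha => bound lam a fun x => mul_nonneg hlam.le (ha x)⟩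

end Choquard
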